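/- Let A and B be the companion matrices of f(x) = (x-1)^6 and g(x) = (x+1)^2(x^2+x+1)^2 respectively, regarded as elements of GL(6,ℤ). Then the elements t = A⁻¹B and r = A⁻¹BA both have infinite order, the subgroup of GL(6,ℤ) generated by A and B equals the subgroup generated by t and r, and this group is the internal free product of the cyclic subgroups ⟨t⟩ and ⟨r⟩; in particular, the hypergeometric group Γ(α,β) with α = (0,0,0,0,0,0) and β = (1/2,1/2,1/3,2/3,1/3,2/3) is isomorphic to ℤ * ℤ, a free group of rank 2. -/

import Mathlib

open Matrix

/-- The companion matrix of `f(x) = (x-1)^6 = x^6 - 6x^5 + 15x^4 - 20x^3 + 15x^2 - 6x + 1`. -/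
def companionF : Matrix (Fin 6) (Fin 6) ℤ :=
  !![0,0,0,0,0,-1; 1,0,0,0,0,6; 0,1,0,0,0,-15; 0,0,1,0,0,20; 0,0,0,1,0,-15; 0,0,0,0,1,6]

/-- The companion matrix of `g(x) = (x+1)^2(x^2+x+1)^2 = x^6 + 4x^5 + 8x^4 + 10x^3 + 8x^2 + 4x + 1`. -/
def companionG : Matrix (Fin 6) (Fin 6) ℤ :=
  !![0,0,0,0,0,-1; 1,0,0,0,0,-4; 0,1,0,0,0,-8; 0,0,1,0,0,-10; 0,0,0,1,0,-8; 0,0,0,0,1,-4]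

/-!
Play ping-pong on `ℤ⁶` with `t` and `r`. Each of the two sets is a union of polyhedral cones, made
symmetric under negation and under an involution `e` that conjugates `t` and `r` to their inverses;
this reduces the game to positive powers, and allows `r` to be replaced by `-r`. The matrices `t`
and `(-r)⁶` are unipotent of index two, so `(-r)^(6q + k) = (-r)^k + q N (-r)^k` for
`N = (-r)⁶ - 1`: infinitely many powers respect the cones as soon as the matrices `(-r)^k` and
`N (-r)^k`, `1 ≤ k ≤ 6`, do. For a simplicial cone this is the nonnegativity of finitely many
integers. The two sets overlap, but the ping-pong argument survives as long as the first one is not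
contained in the second: a word can be conjugated so that it starts and ends with a power of the
generator belonging to the second set, and then it maps the first set into the second one, unlike
the identity.
-/

section PingPong

open Monoid CoprodI
open scoped Pointwise Cardinal

variable {ι G α : Type*} [Group G] [MulAction G α] {X : ι → Set α} {i j k l : ι}

section FreeProduct

variable {H : ι → Type*} [∀ i, Group (H i)] {f : ∀ i, H i →* G}
  (hpp : Pairwise fun i j => ∀ h : H i, h ≠ 1 → f i h • X j ⊆ X i) (hX : ¬ X k ⊆ X i)
include hpp hX

theorem coprodI_lift_prod_ne_one_of_head_eq_of_last_ne (w : NeWord H i j) (hjk : j ≠ k) :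
    CoprodI.lift f w.prod ≠ 1 := fun hw =>
  hX <| by simpa [hw] using lift_word_ping_pong f X hpp w hjk

theorem coprodI_lift_prod_ne_one_of_head_eq (hcard : 3 ≤ #(H i)) (w : NeWord H i j) :
    CoprodI.lift f w.prod ≠ 1 := by
  have hik : i ≠ k := fun h => hX (h ▸ subset_rfl)
  rcases eq_or_ne j i with rfl | hji
  · exact coprodI_lift_prod_ne_one_of_head_eq_of_last_ne hpp hX w hik
  obtain ⟨h, hh, hhw⟩ := Cardinal.exists_ne_ne_of_three_le hcard 1 w.head⁻¹
  let conj : NeWord H i i :=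
    .append (w.mulHead h (mt eq_inv_of_mul_eq_one_left hhw)) hji
      (.singleton h⁻¹ (inv_ne_one.mpr hh))
  intro hw
  exact coprodI_lift_prod_ne_one_of_head_eq_of_last_ne hpp hX conj hik (by simp [conj, hw])

theorem coprodI_lift_prod_ne_one (hcard : 3 ≤ #(H i)) (w : NeWord H j l) :
    CoprodI.lift f w.prod ≠ 1 := by
  rcases eq_or_ne j i with rfl | hji
  · exact coprodI_lift_prod_ne_one_of_head_eq hpp hX hcard w
  intro hw
  rcases eq_or_ne l i with rfl | hli
  · exact coprodI_lift_prod_ne_one_of_head_eq hpp hX hcard w.inv (by simp [hw])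
  obtain ⟨h, hh, -⟩ := Cardinal.exists_ne_ne_of_three_le hcard 1 1
  let conj : NeWord H i i :=
    .append (.append (.singleton h hh) hji.symm w) hli (.singleton h⁻¹ (inv_ne_one.mpr hh))
  exact coprodI_lift_prod_ne_one_of_head_eq hpp hX hcard conj (by simp [conj, hw])

theorem coprodI_lift_injective_of_ping_pong_of_not_subset (hcard : 3 ≤ #(H i)) :
    Function.Injective (CoprodI.lift f) := by
  classical
  refine (injective_iff_map_eq_one _).mpr (Word.equiv.forall_congr_left.mpr fun w hw => ?_)
  by_contra hne
  obtain ⟨j, l, w, rfl⟩ := NeWord.of_word w fun h => hne (by simp [h, Word.equiv])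
  exact coprodI_lift_prod_ne_one hpp hX hcard w hw

end FreeProduct

theorem freeGroup_lift_injective_of_ping_pong_of_not_subset {a : ι → G}
    (hpp : Pairwise fun i j => ∀ n : ℤ, n ≠ 0 → a i ^ n • X j ⊆ X i) (hX : ¬ X k ⊆ X i) :
    Function.Injective (FreeGroup.lift a) := by
  have hlift : FreeGroup.lift a =
      (CoprodI.lift fun i => FreeGroup.lift fun _ : Unit => a i).comp
        freeGroupEquivCoprodI.toMonoidHom := by
    ext; simp
  rw [hlift, MonoidHom.coe_comp]
  refine .comp ?_ (MulEquiv.injective _)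
  refine coprodI_lift_injective_of_ping_pong_of_not_subset (fun i j hij => ?_) hX ?_
  · refine FreeGroup.freeGroupUnitEquivInt.forall_congr_left.mpr fun n hn => ?_
    have hn0 : n ≠ 0 := by rintro rfl; exact hn rfl
    simpa [FreeGroup.freeGroupUnitEquivInt] using hpp hij n hn0
  · rw [FreeGroup.freeGroupUnitEquivInt.cardinal_eq, Cardinal.mk_denumerable]
    exact Cardinal.natCast_le_aleph0

theorem freeGroup_lift_pair_injective_of_ping_pong {a b : G} {Y Z : Set α}
    (ha : ∀ n : ℤ, n ≠ 0 → ∀ z ∈ Z, a ^ n • z ∈ Y) (hb : ∀ n : ℤ, n ≠ 0 → ∀ y ∈ Y, b ^ n • y ∈ Z)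
    (hYZ : ¬ Y ⊆ Z) :
    Function.Injective (FreeGroup.lift ![a, b]) := by
  refine freeGroup_lift_injective_of_ping_pong_of_not_subset (X := ![Y, Z]) (i := 1) (k := 0)
    (fun i j hij n hn => ?_) hYZ
  rw [Set.smul_set_subset_iff]
  fin_cases i <;> fin_cases j
  · exact absurd rfl hij
  · exact ha n hn
  · exact hb n hn
  · exact absurd rfl hij

end PingPong

section FreeGroup

variable {ι G : Type*} [Group G]

theorem not_isOfFinOrder_of_freeGroup_lift_injective {a : ι → G}
    (ha : Function.Injective (FreeGroup.lift a)) (i : ι) : ¬ IsOfFinOrder (a i) := by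
  rw [← FreeGroup.lift_apply_of (f := a), ha.isOfFinOrder_iff]
  exact not_isOfFinOrder_of_isMulTorsionFree (FreeGroup.of_ne_one i)

/-- The subgroup generated by a family `a` satisfying no relation, identified with the free group on
the index type of `a`. -/
noncomputable def closureRangeEquivFreeGroup {a : ι → G}
    (ha : Function.Injective (FreeGroup.lift a)) : Subgroup.closure (Set.range a) ≃* FreeGroup ι :=
  ((MonoidHom.ofInjective ha).trans
    (MulEquiv.subgroupCongr (FreeGroup.range_lift_eq_closure))).symm

theorem coprod_lift_zpowers_injective {a b : G}
    (hab : Function.Injective (FreeGroup.lift ![a, b])) :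
    Function.Injective
      (Monoid.Coprod.lift (Subgroup.zpowers a).subtype (Subgroup.zpowers b).subtype) := by
  let π : FreeGroup (Fin 2) →* Monoid.Coprod (Subgroup.zpowers a) (Subgroup.zpowers b) :=
    FreeGroup.lift ![.inl ⟨a, Subgroup.mem_zpowers a⟩, .inr ⟨b, Subgroup.mem_zpowers b⟩]
  have hπ : (Monoid.Coprod.lift (Subgroup.zpowers a).subtype (Subgroup.zpowers b).subtype).comp π =
      FreeGroup.lift ![a, b] := by
    ext i; fin_cases i <;> simp [π]
  have hsurj : Function.Surjective π := by
    rw [← MonoidHom.range_eq_top, ← top_le_iff, ← Monoid.Coprod.range_inl_sup_range_inr, sup_le_iff]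
    constructor <;> rintro _ ⟨⟨_, n, rfl⟩, rfl⟩
    · exact ⟨.of 0 ^ n, by rw [map_zpow, FreeGroup.lift_apply_of]; exact (map_zpow _ _ n).symm⟩
    · exact ⟨.of 1 ^ n, by rw [map_zpow, FreeGroup.lift_apply_of]; exact (map_zpow _ _ n).symm⟩
  refine Function.Injective.of_comp_right ?_ hsurj
  rwa [← MonoidHom.coe_comp, hπ]

theorem coprod_lift_zpowers_range (a b : G) :
    (Monoid.Coprod.lift (Subgroup.zpowers a).subtype (Subgroup.zpowers b).subtype).range =
      Subgroup.closure {a, b} := by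
  rw [Monoid.Coprod.range_lift, Subgroup.range_subtype, Subgroup.range_subtype,
    Subgroup.zpowers_eq_closure, Subgroup.zpowers_eq_closure, ← Subgroup.closure_union,
    Set.singleton_union]

theorem closure_inv_mul_pair (a b : G) :
    Subgroup.closure {a, b} = Subgroup.closure {a⁻¹ * b, a⁻¹ * b * a} := by
  have hA {x y : G} : x ∈ Subgroup.closure {x, y} := Subgroup.subset_closure (.inl rfl)
  have hB {x y : G} : y ∈ Subgroup.closure {x, y} := Subgroup.subset_closure (.inr rfl)
  refine le_antisymm ?_ ?_ <;> rw [Subgroup.closure_le, Set.pair_subset_iff]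
  · have ha : a ∈ Subgroup.closure {a⁻¹ * b, a⁻¹ * b * a} := by
      simpa [mul_assoc] using mul_mem (inv_mem hA) (hB (x := a⁻¹ * b) (y := a⁻¹ * b * a))
    exact ⟨ha, by simpa using mul_mem ha (hA (x := a⁻¹ * b) (y := a⁻¹ * b * a))⟩
  · exact ⟨mul_mem (inv_mem hA) hB, mul_mem (mul_mem (inv_mem hA) hB) hA⟩

end FreeGroup

section ConjInv

variable {G α : Type*} [Group G] [MulAction G α] {a e : G} {X Y : Set α}

theorem zpow_smul_mem_of_conj_eq_inv (he : e * a * e⁻¹ = a⁻¹) (hX : ∀ x ∈ X, e • x ∈ X)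
    (hY : ∀ y ∈ Y, e⁻¹ • y ∈ Y) (ha : ∀ n : ℕ, ∀ y ∈ Y, a ^ (n + 1) • y ∈ X)
    (n : ℤ) (hn : n ≠ 0) :
    ∀ y ∈ Y, a ^ n • y ∈ X := by
  intro y hy
  obtain ⟨m, rfl | rfl⟩ := n.eq_nat_or_neg <;>
    obtain ⟨m, rfl⟩ := Nat.exists_eq_add_one_of_ne_zero (by simpa using hn)
  · exact_mod_cast ha m y hy
  · rw [_root_.zpow_neg, zpow_natCast, ← inv_pow, ← he, conj_pow, mul_smul, mul_smul]
    exact hX _ (ha m _ (hY y hy))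

end ConjInv

section UnionNeg

open scoped Pointwise

theorem neg_mem_union_neg {V : Type*} [InvolutiveNeg V] {S : Set V} {x : V} :
    -x ∈ S ∪ -S ↔ x ∈ S ∪ -S := by
  simp [or_comm]

theorem smul_mem_union_neg {M V : Type*} [AddGroup V] [DistribSMul M V] {S S' : Set V} {g : M}
    {x : V} (h : ∀ x ∈ S, g • x ∈ S' ∪ -S') (hx : x ∈ S ∪ -S) :
    g • x ∈ S' ∪ -S' := by
  rcases hx with hx | hx
  · exact h x hx
  · simpa [or_comm] using h (-x) hx

end UnionNeg

section QuasiUnipotent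

variable {A V : Type*} [Ring A] [AddCommGroup V] [Module A V] {a : A}

theorem pow_eq_one_add_nsmul_of_sq_sub_one_eq_zero (ha : (a - 1) ^ 2 = 0) (q : ℕ) :
    a ^ q = 1 + q • (a - 1) := by
  induction q with
  | zero => simp
  | succ q ih =>
    have h : (a - 1) * a = a - 1 := by
      rw [← sub_eq_zero, ← ha]; noncomm_ring
    rw [pow_succ, ih, add_mul, one_mul, smul_mul_assoc, h, succ_nsmul']
    abel

theorem pow_smul_mem_of_sq_pow_sub_one_eq_zero {m : ℕ} (hm : 0 < m) (ha : (a ^ m - 1) ^ 2 = 0)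
    (W : AddSubmonoid V) {x : V}
    (hW : ∀ k < m, a ^ k • x ∈ W ∧ (a ^ m - 1) • a ^ k • x ∈ W) (n : ℕ) : a ^ n • x ∈ W := by
  obtain ⟨hk, hNk⟩ := hW _ (n.mod_lt hm)
  have hpow : a ^ n = a ^ (n % m) + (n / m) • (a ^ m - 1) * a ^ (n % m) := by
    conv_lhs => rw [← Nat.div_add_mod n m]
    rw [pow_add, pow_mul, pow_eq_one_add_nsmul_of_sq_sub_one_eq_zero ha, add_mul, one_mul]
  rw [hpow, add_smul, mul_smul, smul_assoc]
  exact add_mem hk (nsmul_mem hNk _)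

end QuasiUnipotent

section InequalityCone

variable {R k l m n : Type*} [CommRing R] [Fintype l] [Fintype m] [Fintype n]

/-- The polyhedral cone `{x | 0 ≤ L x}`, whose facets are given by the rows of `L`. -/
def inequalityCone [PartialOrder R] [IsOrderedRing R] (L : Matrix k n R) : PointedCone R (n → R) :=
  (PointedCone.positive R (k → R)).comap L.mulVecLin

theorem mem_inequalityCone [PartialOrder R] [IsOrderedRing R] {L : Matrix k n R} {x : n → R} :
    x ∈ inequalityCone L ↔ ∀ i, 0 ≤ (L *ᵥ x) i :=
  Iff.rfl

theorem mulVec_mem_inequalityCone [LinearOrder R] [IsStrictOrderedRing R] [DecidableEq n]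
    {L : Matrix l n R} {C : Matrix n l R} {d : R} (hd : 0 < d) (hCL : C * L = d • 1)
    {L' : Matrix k m R} {M : Matrix m n R} (hM : ∀ i j, 0 ≤ (L' * M * C) i j) {x : n → R}
    (hx : x ∈ inequalityCone L) : M *ᵥ x ∈ inequalityCone L' := by
  refine mem_inequalityCone.mpr fun i => ?_
  have hdx : (L' * M * C) *ᵥ L *ᵥ x = d • L' *ᵥ M *ᵥ x := by
    rw [mulVec_mulVec, mulVec_mulVec, Matrix.mul_assoc _ C L, hCL, Matrix.mul_smul, Matrix.mul_one,
      smul_mulVec]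
  refine (mul_nonneg_iff_of_pos_left hd).mp ?_
  calc
    0 ≤ ((L' * M * C) *ᵥ L *ᵥ x) i := Finset.sum_nonneg fun j _ => mul_nonneg (hM i j) (hx j)
    _ = d * (L' *ᵥ M *ᵥ x) i := by rw [hdx, Pi.smul_apply, smul_eq_mul]

end InequalityCone

/-- The matrix of `t = A⁻¹B`. Since `A` and `B` differ in the last column only, it is a rank-one
perturbation of the identity; it is in fact a transvection. -/
def tMatrix : Matrix (Fin 6) (Fin 6) ℤ :=
  1 + vecMulVec ![-10, 7, -30, 7, -10, 0] (Pi.single 5 1)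

/-- The matrix of `-r = -A⁻¹BA`. With this sign all positive powers map `tCone` into `rCone`,
whereas those of `r` alternate between `rCone` and `-rCone`. -/
def negRMatrix : Matrix (Fin 6) (Fin 6) ℤ :=
  -(tMatrix * companionF)

/-- An involution conjugating both `t` and `r` to their inverses; it reduces negative
powers in the ping-pong to positive ones. -/
def reversal : Matrix (Fin 6) (Fin 6) ℤ :=
  !![0, 0, 0, 0, 1, 16;
     0, 0, 0, 1, 0, -22;
     0, 0, 1, 0, 0, 50;
     0, 1, 0, 0, 0, -22;
     1, 0, 0, 0, 0, 16;
     0, 0, 0, 0, 0, -1]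

theorem companionF_mul_tMatrix : companionF * tMatrix = companionG := by
  decide +kernel

theorem sq_tMatrix_sub_one : (tMatrix - 1) ^ 2 = 0 := by
  decide +kernel

theorem sq_negRMatrix_pow_six_sub_one : (negRMatrix ^ 6 - 1) ^ 2 = 0 := by
  decide +kernel

theorem reversal_mul_reversal : reversal * reversal = 1 := by
  decide +kernel

theorem reversal_mul_tMatrix_mul_reversal_mul_tMatrix :
    reversal * tMatrix * reversal * tMatrix = 1 := by
  decide +kernel

theorem reversal_mul_negRMatrix_mul_reversal_mul_negRMatrix :
    reversal * negRMatrix * reversal * negRMatrix = 1 := by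
  decide +kernel

/-- The facet normals of `tCone`, as rows. -/
def facetMatrix : Matrix (Fin 6) (Fin 6) ℤ :=
  !![-1, -1, -1, -1, -1, -37;
     -2, -1, 0, 1, 2, 3;
     -61, 19, 44, 14, -71, -442;
     3, 7, 0, -7, -3, 23;
     25, 18, -11, -7, 8, -142;
     8, -7, 0, 7, -8, 10]

/-- The extremal rays of `tCone`, as columns, rescaled so that `rayMatrix * facetMatrix` is scalar.
A matrix `M` preserves `tCone` if and only if `facetMatrix * M * rayMatrix` is nonnegative. -/
def rayMatrix : Matrix (Fin 6) (Fin 6) ℤ :=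
  !![-1, -15, -3, -24, -1, -11;
     0, 15, 5, 25, 4, 12;
     -3, -42, -4, -71, -6, -40;
     0, 17, 5, 21, 4, 17;
     -1, -12, -3, -25, -1, -15;
     0, 1, 0, 2, 0, 1] * diagonal ![77, 35, 1, 5, 5, 5]

theorem rayMatrix_mul_facetMatrix : rayMatrix * facetMatrix = (385 : ℤ) • 1 := by
  decide +kernel

/-- The simplicial cone with facet normals `facetMatrix`. Together with its negative and the images
of both under `reversal`, it forms the side `tSet` of the ping-pong table. -/
noncomputable def tCone : PointedCone ℤ (Fin 6 → ℤ) :=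
  inequalityCone facetMatrix

/-- The cone of all `y` with `t y` and `-t e y` in `tCone`, where `e` is `reversal`.
As `e t e = t⁻¹`, the second condition says that `t⁻¹ y` lies in `-e tCone`: the cone is thus the
largest one that `t` and `t⁻¹` send into `tCone` and `-e tCone`, respectively. -/
noncomputable def rCone : PointedCone ℤ (Fin 6 → ℤ) :=
  tCone.comap tMatrix.mulVecLin ⊓ tCone.comap (-(tMatrix * reversal)).mulVecLin

section PingPongTable

open scoped Pointwise

variable {t r : GL (Fin 6) ℤ} {x y : Fin 6 → ℤ}

theorem mulVec_mem_tCone {M : Matrix (Fin 6) (Fin 6) ℤ}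
    (hM : ∀ i j, 0 ≤ (facetMatrix * M * rayMatrix) i j) (hx : x ∈ tCone) : M *ᵥ x ∈ tCone :=
  mulVec_mem_inequalityCone (by norm_num) rayMatrix_mul_facetMatrix hM hx

theorem neg_reversal_mulVec_mem_rCone (hy : y ∈ rCone) : -(reversal *ᵥ y) ∈ rCone := by
  obtain ⟨hty, htey⟩ := hy
  constructor
  · simpa [mulVec_neg, neg_mulVec] using htey
  · simpa [mulVec_neg, neg_mulVec, Matrix.mul_assoc, reversal_mul_reversal] using hty

theorem tMatrix_sub_one_mulVec_mem_tCone (hx : x ∈ tCone) : (tMatrix - 1) *ᵥ x ∈ tCone :=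
  mulVec_mem_tCone (by decide +kernel) hx

theorem tMatrix_pow_succ_mulVec_mem_tCone (hy : y ∈ rCone) (n : ℕ) :
    tMatrix ^ (n + 1) *ᵥ y ∈ tCone := by
  have hty : tMatrix *ᵥ y ∈ tCone := hy.1
  rw [pow_succ, ← mulVec_mulVec, ← smul_eq_mulVec]
  refine pow_smul_mem_of_sq_pow_sub_one_eq_zero one_pos ?_ tCone.toAddSubmonoid (fun k hk => ?_) n
  · rw [pow_one, sq_tMatrix_sub_one]
  · obtain rfl : k = 0 := Nat.lt_one_iff.mp hk
    rw [pow_zero, one_smul, pow_one]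
    exact ⟨hty, tMatrix_sub_one_mulVec_mem_tCone hty⟩

theorem facetMatrix_mul_negRMatrix_pow_mul_rayMatrix_nonneg :
    ∀ w ∈ [tMatrix, -(tMatrix * reversal)], ∀ u ∈ [1, negRMatrix ^ 6 - 1], ∀ k < 6,
      ∀ g ∈ [1, reversal], ∀ i j,
        0 ≤ (facetMatrix * (w * (u * (negRMatrix ^ k * (negRMatrix * g)))) * rayMatrix) i j := by
  decide +kernel

theorem negRMatrix_pow_lt_six_mulVec_mem_rCone {u g : Matrix (Fin 6) (Fin 6) ℤ} {k : ℕ}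
    (hu : u ∈ [1, negRMatrix ^ 6 - 1]) (hk : k < 6) (hg : g ∈ [1, reversal]) (hx : x ∈ tCone) :
    (u * (negRMatrix ^ k * (negRMatrix * g))) *ᵥ x ∈ rCone := by
  have hw {w : Matrix (Fin 6) (Fin 6) ℤ} (hw : w ∈ [tMatrix, -(tMatrix * reversal)]) :
      w *ᵥ (u * (negRMatrix ^ k * (negRMatrix * g))) *ᵥ x ∈ tCone := by
    rw [mulVec_mulVec]
    exact mulVec_mem_tCone
      (facetMatrix_mul_negRMatrix_pow_mul_rayMatrix_nonneg w hw u hu k hk g hg) hx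
  exact ⟨hw (by simp), hw (by simp)⟩

theorem negRMatrix_pow_succ_mul_mulVec_mem_rCone {g : Matrix (Fin 6) (Fin 6) ℤ}
    (hg : g ∈ [1, reversal]) (hx : x ∈ tCone) (n : ℕ) :
    (negRMatrix ^ (n + 1) * g) *ᵥ x ∈ rCone := by
  rw [pow_succ, Matrix.mul_assoc, ← mulVec_mulVec, ← smul_eq_mulVec]
  refine pow_smul_mem_of_sq_pow_sub_one_eq_zero (by norm_num) sq_negRMatrix_pow_six_sub_one
    rCone.toAddSubmonoid (fun k hk => ?_) n
  simp only [smul_eq_mulVec, mulVec_mulVec]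
  exact ⟨by simpa using negRMatrix_pow_lt_six_mulVec_mem_rCone (u := 1) (by simp) hk hg hx,
    negRMatrix_pow_lt_six_mulVec_mem_rCone (by simp) hk hg hx⟩

/-- The side of the ping-pong table that the nonzero powers of `t` map `rSet` into. -/
def tSet : Set (Fin 6 → ℤ) :=
  {x | x ∈ tCone ∨ reversal *ᵥ x ∈ tCone} ∪ -{x | x ∈ tCone ∨ reversal *ᵥ x ∈ tCone}

/-- The side of the ping-pong table that the nonzero powers of `r` map `tSet` into. -/
def rSet : Set (Fin 6 → ℤ) :=
  rCone ∪ -rCone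

/-- The matrix `reversal` as an invertible matrix. -/
def reversalUnit : GL (Fin 6) ℤ :=
  ⟨reversal, reversal, reversal_mul_reversal, reversal_mul_reversal⟩

theorem reversalUnit_smul_mem_tSet (hx : x ∈ tSet) : reversalUnit • x ∈ tSet := by
  refine smul_mem_union_neg (fun x hx => Or.inl ?_) hx
  have h : reversal *ᵥ reversalUnit • x = x := by
    change reversal *ᵥ reversal *ᵥ x = x
    rw [mulVec_mulVec, reversal_mul_reversal, one_mulVec]
  exact hx.symm.imp id h.symm.subst

theorem reversalUnit_smul_mem_rSet (hx : x ∈ rSet) : reversalUnit • x ∈ rSet :=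
  smul_mem_union_neg (fun _ hx => .inr (neg_reversal_mulVec_mem_rCone hx)) hx

theorem reversalUnit_conj_eq_inv {a : GL (Fin 6) ℤ}
    (ha : reversal * (a : Matrix (Fin 6) (Fin 6) ℤ) * reversal * a = 1) :
    reversalUnit * a * reversalUnit⁻¹ = a⁻¹ :=
  eq_inv_of_mul_eq_one_left (Units.ext ha)

theorem pow_succ_smul_mem_tSet (ht : (t : Matrix (Fin 6) (Fin 6) ℤ) = tMatrix) (n : ℕ)
    (hy : y ∈ rSet) : t ^ (n + 1) • y ∈ tSet := by
  refine smul_mem_union_neg (fun y hy => .inl (.inl ?_)) hy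
  rw [Units.smul_def, Units.val_pow_eq_pow_val, ht]
  exact tMatrix_pow_succ_mulVec_mem_tCone hy n

theorem pow_succ_smul_mem_rSet (hr : (r : Matrix (Fin 6) (Fin 6) ℤ) = -negRMatrix) (n : ℕ)
    (hx : x ∈ tSet) : r ^ (n + 1) • x ∈ rSet := by
  refine smul_mem_union_neg (fun x hx => ?_) hx
  have hcone : negRMatrix ^ (n + 1) *ᵥ x ∈ rCone := by
    rcases hx with hx | hx
    · simpa using negRMatrix_pow_succ_mul_mulVec_mem_rCone (g := 1) (by simp) hx n
    · simpa [Matrix.mul_assoc, reversal_mul_reversal] using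
        negRMatrix_pow_succ_mul_mulVec_mem_rCone (g := reversal) (by simp) hx n
  rw [Units.smul_def, Units.val_pow_eq_pow_val, hr, smul_eq_mulVec]
  rcases (n + 1).even_or_odd with h | h
  · rw [h.neg_pow]
    exact .inl hcone
  · rw [h.neg_pow, neg_mulVec]
    exact neg_mem_union_neg.mpr (.inl hcone)

theorem zpow_smul_mem_tSet (ht : (t : Matrix (Fin 6) (Fin 6) ℤ) = tMatrix) (n : ℤ) (hn : n ≠ 0) :
    ∀ y ∈ rSet, t ^ n • y ∈ tSet :=
  zpow_smul_mem_of_conj_eq_inv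
    (reversalUnit_conj_eq_inv (by rw [ht, reversal_mul_tMatrix_mul_reversal_mul_tMatrix]))
    (fun _ => reversalUnit_smul_mem_tSet) (fun _ => reversalUnit_smul_mem_rSet)
    (fun n _ => pow_succ_smul_mem_tSet ht n) n hn

theorem zpow_smul_mem_rSet (hr : (r : Matrix (Fin 6) (Fin 6) ℤ) = -negRMatrix) (n : ℤ)
    (hn : n ≠ 0) : ∀ x ∈ tSet, r ^ n • x ∈ rSet :=
  zpow_smul_mem_of_conj_eq_inv
    (reversalUnit_conj_eq_inv (by
      simp [hr, reversal_mul_negRMatrix_mul_reversal_mul_negRMatrix]))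
    (fun _ => reversalUnit_smul_mem_rSet) (fun _ => reversalUnit_smul_mem_tSet)
    (fun n _ => pow_succ_smul_mem_rSet hr n) n hn

theorem not_tSet_subset_rSet : ¬ tSet ⊆ rSet := by
  let p : Fin 6 → ℤ := ![-1, 0, -3, 0, -1, 0]
  have hp : p ∈ tCone := mem_inequalityCone.mpr (by decide +kernel)
  have hnp : -p ∉ tCone := mem_inequalityCone.not.mpr (by decide +kernel)
  have htp : tMatrix *ᵥ p = p := by decide +kernel
  have hep : reversal *ᵥ p = p := by decide +kernel
  intro h
  rcases h (.inl (.inl hp)) with hp' | hp'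
  · have hte : -(tMatrix * reversal) *ᵥ p ∈ tCone := hp'.2
    exact hnp (by simpa [neg_mulVec, ← mulVec_mulVec, htp, hep] using hte)
  · have ht : tMatrix *ᵥ (-p) ∈ tCone := hp'.1
    exact hnp (by simpa [mulVec_neg, htp] using ht)

theorem freeGroup_lift_tMatrix_neg_negRMatrix_injective
    (ht : (t : Matrix (Fin 6) (Fin 6) ℤ) = tMatrix)
    (hr : (r : Matrix (Fin 6) (Fin 6) ℤ) = -negRMatrix) :
    Function.Injective (FreeGroup.lift ![t, r]) :=
  freeGroup_lift_pair_injective_of_ping_pong (zpow_smul_mem_tSet ht) (zpow_smul_mem_rSet hr)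
    not_tSet_subset_rSet

end PingPongTable

/-- The hypergeometric group with `α = (0,0,0,0,0,0)`, `β = (1/2,1/2,1/3,2/3,1/3,2/3)` is
free of rank two: `t = A⁻¹B` and `r = A⁻¹BA` have infinite order, generate the group
generated by `A` and `B`, and the group is the internal free product of `⟨t⟩` and `⟨r⟩`;
in particular it is isomorphic to `ℤ * ℤ`, the free group of rank `2`. -/
theorem hypergeometric_free_of_rank_two
    (A B : GL (Fin 6) ℤ)
    (hA : (A : Matrix (Fin 6) (Fin 6) ℤ) = companionF)
    (hB : (B : Matrix (Fin 6) (Fin 6) ℤ) = companionG) :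
    ¬ IsOfFinOrder (A⁻¹ * B) ∧ ¬ IsOfFinOrder (A⁻¹ * B * A) ∧
    Subgroup.closure {A, B} = Subgroup.closure {A⁻¹ * B, A⁻¹ * B * A} ∧
    Function.Injective
      (Monoid.Coprod.lift (Subgroup.zpowers (A⁻¹ * B)).subtype
        (Subgroup.zpowers (A⁻¹ * B * A)).subtype) ∧
    (Monoid.Coprod.lift (Subgroup.zpowers (A⁻¹ * B)).subtype
        (Subgroup.zpowers (A⁻¹ * B * A)).subtype).range = Subgroup.closure {A, B} ∧
    Nonempty ((Subgroup.closure {A, B} : Subgroup (GL (Fin 6) ℤ)) ≃* FreeGroup (Fin 2)) := by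
  have ht : ((A⁻¹ * B : GL (Fin 6) ℤ) : Matrix (Fin 6) (Fin 6) ℤ) = tMatrix := by
    rw [Units.val_mul, hB, ← companionF_mul_tMatrix, ← hA, Units.inv_mul_cancel_left]
  have hr : ((A⁻¹ * B * A : GL (Fin 6) ℤ) : Matrix (Fin 6) (Fin 6) ℤ) = -negRMatrix := by
    rw [Units.val_mul, ht, hA, negRMatrix, neg_neg]
  have hfree := freeGroup_lift_tMatrix_neg_negRMatrix_injective ht hr
  have hgen := closure_inv_mul_pair A B
  refine ⟨not_isOfFinOrder_of_freeGroup_lift_injective hfree 0,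
    not_isOfFinOrder_of_freeGroup_lift_injective hfree 1, hgen, coprod_lift_zpowers_injective hfree,
    by rw [coprod_lift_zpowers_range, hgen], ?_⟩
  rw [hgen, ← range_cons_cons_empty]
  exact ⟨closureRangeEquivFreeGroup hfree⟩
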